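/- Let 0 < α < 1, ρ, x₀, y₁ ∈ ℝ and 0 < t₁ < T. Define x : [0,T] → ℝ piecewise by x(t) = E_{α,1}(ρ t^α) x₀ + ∫_0^t (t−θ)^{α−1} E_{α,α}(ρ (t−θ)^α) θ dθ for t ∈ [0,t₁], and x(t) = E_{α,1}(ρ (t−t₁)^α) [x(t₁) + y₁] + ∫_{t₁}^t (t−θ)^{α−1} E_{α,α}(ρ (t−θ)^α) θ dθ for t ∈ (t₁,T]. Then it is NOT the case that for all t ∈ (t₁,T], (1/Γ(1−α)) ∫_0^t (t−s)^{−α} x'(s) ds = ρ x(t) + t, where x' denotes the piecewise derivative of x (which exists for all s ∈ (0,t) with s ≠ t₁). That is, the mild-solution formula obtained by restarting the integral at the impulse time t₁ does not solve the Caputo equation of order α with base point 0. -/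

import Mathlib

/-!
Write `K_β(τ) = τ^β E_{α,β+1}(ρ τ^α) = ∑_j ρ^j τ^(αj+β) / Γ(αj+β+1)` (`mlKer`). Integrating term
by term with Euler's beta integral, the Riemann-Liouville integral of order `γ` sends `K_β` to
`K_{β+γ}` (`integral_mlKer`). With `γ = 1, 2` this rewrites a mild-solution piece started at `c` from
the value `a` as `a K_0 + c K_α + K_{α+1}`, evaluated at `t - c`, and shows that its derivative is
`(aρ + c) K_{α-1} + K_α`; with `γ = 1 - α` it shows that the piece solves the Caputo equation
*with base point `c`* (`caputo_mild`).

Hence on `(t₁, T)` the part of the Caputo integral over `[t₁, t]` already produces `ρ x(t) + t`. If the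
equation with base point `0` held as well, then `∫_0^{t₁} (t-s)^{-α} x'(s) ds = 0` for all
`t ∈ (t₁, T)`. Differentiating repeatedly in `t` gives
`∫_0^{t₁} (t-s)^{-α-n} x'(s) ds = 0` for all `n`, and polynomials in `(t-s)⁻¹` are uniformly dense in
the continuous functions on `[0, t₁]`, so `x' = 0` almost everywhere there
(`ae_zero_of_riesz_tail`). But then the Caputo equation with base point `0`, valid on `(0, t₁)`, reads
`ρ x₀ + τ = 0` for every `τ ∈ (0, t₁)`, which is absurd.
-/

/-- The (real) Mittag-Leffler function `E_{α,β}(x) = ∑_{j=0}^∞ x^j / Γ(αj + β)`. -/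
noncomputable def mlf (α β x : ℝ) : ℝ := ∑' j : ℕ, x ^ j / Real.Gamma (α * j + β)

open MeasureTheory Set Filter Topology

/-! ### Convergence and continuity of the Mittag-Leffler series -/

/-- Exponential lower bound for `Γ`, with arbitrary base `A`: restrict Euler's integral to
`(A, ∞)`, where `t ^ (s - 1) ≥ A ^ (s - 1)`. -/
lemma rpow_mul_exp_le_Gamma {A s : ℝ} (hA : 0 < A) (hs : 1 ≤ s) :
    A ^ (s - 1) * Real.exp (-A) ≤ Real.Gamma s := by
  have hs0 : 0 < s := by linarith
  have hi := Real.GammaIntegral_convergent hs0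
  have hsub : Ioi A ⊆ Ioi (0 : ℝ) := Ioi_subset_Ioi hA.le
  rw [Real.Gamma_eq_integral hs0, ← integral_exp_neg_Ioi, ← integral_const_mul]
  calc _ ≤ ∫ t in Ioi A, Real.exp (-t) * t ^ (s - 1) := by
        refine setIntegral_mono_on ((integrableOn_exp_neg_Ioi A).const_mul _)
          (hi.mono_set hsub) measurableSet_Ioi fun t ht => ?_
        rw [mul_comm]
        gcongr
        exact le_of_lt ht
    _ ≤ _ := by
        refine setIntegral_mono_set hi ?_ hsub.eventuallyLE
        refine (ae_restrict_mem measurableSet_Ioi).mono fun t ht => ?_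
        have : (0 : ℝ) < t := ht
        simp only [Pi.zero_apply]
        positivity

/-- The Mittag-Leffler series converges everywhere. No positivity of `β` is needed, since only the
terms with `1 ≤ α * j + β` matter. -/
lemma summable_mlf {α β : ℝ} (hα : 0 < α) (x : ℝ) :
    Summable fun j : ℕ => x ^ j / Real.Gamma (α * j + β) := by
  -- with this `A`, the lower bound on `Γ` dominates the series by a geometric one of ratio
  -- `|x| / A ^ α < 1 / 2`
  set A : ℝ := (2 * |x| + 1) ^ (1 / α) with hA
  have hb : 0 < 2 * |x| + 1 := by positivity
  have hA0 : 0 < A := by positivity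
  have hAα : A ^ α = 2 * |x| + 1 := by
    rw [hA, ← Real.rpow_mul hb.le, one_div_mul_cancel hα.ne', Real.rpow_one]
  have hgeo : Summable fun j : ℕ => (Real.exp A * A ^ (1 - β)) * (|x| / A ^ α) ^ j := by
    refine (summable_geometric_of_lt_one (by positivity) ?_).mul_left _
    rw [hAα, div_lt_one hb]
    linarith [abs_nonneg x]
  refine Summable.of_norm_bounded_eventually_nat hgeo ?_
  obtain ⟨N, hN⟩ := exists_nat_ge ((1 - β) / α)
  filter_upwards [eventually_ge_atTop N] with j hj
  have h1 : 1 ≤ α * j + β := by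
    have : (1 - β) / α ≤ j := hN.trans (by exact_mod_cast hj)
    rw [div_le_iff₀ hα] at this
    linarith
  have hG := rpow_mul_exp_le_Gamma hA0 h1
  have hpos : 0 < A ^ (α * j + β - 1) * Real.exp (-A) := by positivity
  have hG0 : 0 < Real.Gamma (α * j + β) := hpos.trans_le hG
  rw [norm_div, norm_pow, Real.norm_eq_abs, Real.norm_eq_abs, abs_of_pos hG0]
  calc |x| ^ j / Real.Gamma (α * j + β)
      ≤ |x| ^ j / (A ^ (α * j + β - 1) * Real.exp (-A)) := by gcongr
    _ = _ := by
      have e : A ^ (α * j + β - 1) = (A ^ α) ^ j * (A ^ (1 - β))⁻¹ := by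
        rw [← Real.rpow_natCast (A ^ α), ← Real.rpow_mul hA0.le, ← Real.rpow_neg hA0.le,
          ← Real.rpow_add hA0]
        congr 1; ring
      rw [e, Real.exp_neg, div_pow]
      field_simp

lemma continuous_mlf {α β : ℝ} (hα : 0 < α) (hβ : 0 < β) : Continuous (mlf α β) := by
  rw [continuous_iff_continuousAt]
  intro x
  have hn : Icc (-(|x| + 1)) (|x| + 1) ∈ 𝓝 x :=
    Icc_mem_nhds (by linarith [neg_abs_le x]) (by linarith [le_abs_self x])
  refine ContinuousOn.continuousAt ?_ hn
  refine continuousOn_tsum (fun j => by fun_prop) (summable_mlf (β := β) hα (|x| + 1)) ?_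
  intro j y hy
  have hG : 0 < Real.Gamma (α * j + β) := Real.Gamma_pos_of_pos (by positivity)
  rw [norm_div, norm_pow, Real.norm_eq_abs, Real.norm_eq_abs, abs_of_pos hG]
  gcongr
  exact abs_le.2 hy

/-! ### Riemann-Liouville integrals of Mittag-Leffler kernels -/

/-- Euler's beta integral over `[0, τ]`, in real form. -/
lemma integral_beta_kernel {γ δ τ : ℝ} (hγ : 0 < γ) (hδ : 0 < δ) (hτ : 0 < τ) :
    ∫ s in (0 : ℝ)..τ, (τ - s) ^ (γ - 1) * s ^ (δ - 1) =
      τ ^ (γ + δ - 1) * (Real.Gamma γ * Real.Gamma δ / Real.Gamma (γ + δ)) := by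
  have h := Complex.betaIntegral_scaled (δ : ℂ) (γ : ℂ) hτ
  rw [Complex.betaIntegral_eq_Gamma_mul_div _ _ (by simpa) (by simpa)] at h
  have e : ∫ x in (0 : ℝ)..τ, (x : ℂ) ^ ((δ : ℂ) - 1) * ((τ : ℂ) - x) ^ ((γ : ℂ) - 1) =
      ((∫ s in (0 : ℝ)..τ, (τ - s) ^ (γ - 1) * s ^ (δ - 1) : ℝ) : ℂ) := by
    rw [← intervalIntegral.integral_ofReal]
    refine intervalIntegral.integral_congr fun s hs => ?_
    rw [uIcc_of_le hτ.le] at hs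
    have h1 : 0 ≤ τ - s := sub_nonneg.2 hs.2
    push_cast [Complex.ofReal_cpow hs.1, Complex.ofReal_cpow h1]
    ring
  rw [e] at h
  have e2 : (τ : ℂ) ^ ((δ : ℂ) + γ - 1) = ((τ ^ (γ + δ - 1) : ℝ) : ℂ) := by
    rw [Complex.ofReal_cpow hτ.le]; push_cast; congr 1; ring
  rw [e2, ← Complex.ofReal_add, Complex.Gamma_ofReal, Complex.Gamma_ofReal,
    Complex.Gamma_ofReal] at h
  have h' : ∫ s in (0 : ℝ)..τ, (τ - s) ^ (γ - 1) * s ^ (δ - 1) =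
      τ ^ (γ + δ - 1) * (Real.Gamma δ * Real.Gamma γ / Real.Gamma (δ + γ)) := by
    exact_mod_cast h
  rw [h', add_comm δ, mul_comm (Real.Gamma δ)]

lemma intervalIntegrable_beta_kernel {γ δ τ : ℝ} (hγ : 0 < γ) (hδ : 0 < δ) (hτ : 0 < τ) :
    IntervalIntegrable (fun s => (τ - s) ^ (γ - 1) * s ^ (δ - 1)) volume 0 τ := by
  -- the Bochner integral of a non-integrable function is `0`, while this one is positive
  by_contra hn
  have h := integral_beta_kernel hγ hδ hτ
  rw [intervalIntegral.integral_undef hn] at h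
  have : 0 < τ ^ (γ + δ - 1) * (Real.Gamma γ * Real.Gamma δ / Real.Gamma (γ + δ)) := by
    have := Real.Gamma_pos_of_pos hγ
    have := Real.Gamma_pos_of_pos hδ
    have := Real.Gamma_pos_of_pos (add_pos hγ hδ)
    positivity
  linarith

/-- The kernel `τ^β E_{α,β+1}(ρ τ^α) = ∑_j ρ^j τ^(αj+β) / Γ(αj+β+1)`, meaningful for `τ > 0` and
`β > -1`. The index `β` is the exponent of the leading power, so that fractional integration of order
`γ` is the shift `β ↦ β + γ`. -/
noncomputable def mlKer (α ρ β s : ℝ) : ℝ := s ^ β * mlf α (β + 1) (ρ * s ^ α)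

lemma hasSum_mlKer {α β s : ℝ} (ρ : ℝ) (hα : 0 < α) (hs : 0 < s) :
    HasSum (fun j : ℕ => ρ ^ j / Real.Gamma (α * j + (β + 1)) * s ^ (α * j + β))
      (mlKer α ρ β s) := by
  have h := ((summable_mlf (β := β + 1) hα (ρ * s ^ α)).hasSum).mul_left (s ^ β)
  refine h.congr_fun ?_
  intro j
  rw [mul_pow, ← Real.rpow_natCast (s ^ α), ← Real.rpow_mul hs.le, Real.rpow_add hs]
  ring

lemma continuousOn_mlKer {α β : ℝ} (ρ : ℝ) (hα : 0 < α) (hβ : -1 < β) :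
    ContinuousOn (mlKer α ρ β) (Ioi 0) := by
  have hc := continuous_mlf hα (show 0 < β + 1 by linarith)
  refine ContinuousOn.mul (fun s hs => ?_) (hc.comp_continuousOn ?_)
  · exact (Real.continuousAt_rpow_const _ _ (Or.inl (ne_of_gt hs))).continuousWithinAt
  · exact continuousOn_const.mul (continuousOn_id.rpow_const fun s hs => Or.inl (ne_of_gt hs))

lemma intervalIntegrable_mlKer {α β γ τ : ℝ} (ρ : ℝ) (hα : 0 < α) (hβ : -1 < β) (hγ : 0 < γ)
    (hτ : 0 < τ) :
    IntervalIntegrable (fun s => (τ - s) ^ (γ - 1) * mlKer α ρ β s) volume 0 τ := by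
  have hc := continuous_mlf hα (show 0 < β + 1 by linarith)
  have h := (intervalIntegrable_beta_kernel hγ (show 0 < β + 1 by linarith) hτ).mul_continuousOn
    (g := fun s => mlf α (β + 1) (ρ * s ^ α))
    (hc.comp_continuousOn (continuousOn_const.mul
      (continuousOn_id.rpow_const fun s _ => Or.inr hα.le)))
  refine h.congr fun s _ => ?_
  simp only [mlKer, add_sub_cancel_right]
  ring

/-- The Riemann-Liouville integral of order `γ` shifts the index of the kernel by `γ`; the factor
`Γ(γ)` is its normalization. -/
lemma integral_mlKer {α β γ τ : ℝ} (ρ : ℝ) (hα : 0 < α) (hβ : -1 < β) (hγ : 0 < γ)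
    (hτ : 0 < τ) :
    ∫ s in (0 : ℝ)..τ, (τ - s) ^ (γ - 1) * mlKer α ρ β s =
      Real.Gamma γ * mlKer α ρ (β + γ) τ := by
  have hδ : ∀ j : ℕ, 0 < α * j + (β + 1) := fun j => by
    have : 0 ≤ α * j := by positivity
    linarith
  have hker : ∀ j : ℕ, ∫ s in Ioc 0 τ, (τ - s) ^ (γ - 1) * s ^ (α * j + β) =
      τ ^ (α * j + (β + γ)) * (Real.Gamma γ * Real.Gamma (α * j + (β + 1)) /
        Real.Gamma (α * j + (β + γ + 1))) := fun j => by
    have h := integral_beta_kernel hγ (hδ j) hτ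
    rw [intervalIntegral.integral_of_le hτ.le] at h
    rwa [show α * j + (β + 1) - 1 = α * j + β by ring,
      show γ + (α * j + (β + 1)) - 1 = α * j + (β + γ) by ring,
      show γ + (α * j + (β + 1)) = α * j + (β + γ + 1) by ring] at h
  have hint : ∀ j : ℕ, IntegrableOn (fun s => (τ - s) ^ (γ - 1) * s ^ (α * j + β))
      (Ioc 0 τ) := fun j => by
    have h := (intervalIntegrable_iff_integrableOn_Ioc_of_le hτ.le).1
      (intervalIntegrable_beta_kernel hγ (hδ j) hτ)
    rwa [show α * j + (β + 1) - 1 = α * j + β by ring] at h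
  set F : ℕ → ℝ → ℝ := fun j s => ρ ^ j / Real.Gamma (α * j + (β + 1)) *
    ((τ - s) ^ (γ - 1) * s ^ (α * j + β)) with hF
  have hterm : ∀ (r : ℝ) (j : ℕ), r ^ j / Real.Gamma (α * j + (β + 1)) *
      (τ ^ (α * j + (β + γ)) * (Real.Gamma γ * Real.Gamma (α * j + (β + 1)) /
        Real.Gamma (α * j + (β + γ + 1)))) =
      Real.Gamma γ * (r ^ j / Real.Gamma (α * j + (β + γ + 1)) * τ ^ (α * j + (β + γ))) := by
    intro r j
    have := (Real.Gamma_pos_of_pos (hδ j)).ne'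
    field_simp
  have hnorm : ∀ j, ∫ s in Ioc 0 τ, ‖F j s‖ =
      Real.Gamma γ * (|ρ| ^ j / Real.Gamma (α * j + (β + γ + 1)) * τ ^ (α * j + (β + γ))) := by
    intro j
    rw [← hterm, ← hker, ← integral_const_mul]
    refine setIntegral_congr_fun measurableSet_Ioc fun s hs => ?_
    have h1 : 0 ≤ τ - s := sub_nonneg.2 hs.2
    have h2 : 0 ≤ s := hs.1.le
    have h3 := Real.Gamma_pos_of_pos (hδ j)
    simp only [hF]
    rw [norm_mul, norm_div, norm_pow, Real.norm_eq_abs ρ, Real.norm_of_nonneg h3.le,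
      Real.norm_of_nonneg (by positivity : 0 ≤ (τ - s) ^ (γ - 1) * s ^ (α * j + β))]
  have hS := hasSum_integral_of_summable_integral_norm (F := F) (μ := volume.restrict (Ioc 0 τ))
    (fun j => (hint j).const_mul _) (by
      simp_rw [hnorm]
      exact ((hasSum_mlKer |ρ| hα hτ).summable).mul_left _)
  have h1 : ∀ j, ∫ s in Ioc 0 τ, F j s = Real.Gamma γ *
      (ρ ^ j / Real.Gamma (α * j + (β + γ + 1)) * τ ^ (α * j + (β + γ))) := fun j => by
    rw [← hterm, ← hker, ← integral_const_mul]
  have h2 : ∫ s in Ioc 0 τ, ∑' j, F j s = ∫ s in Ioc 0 τ, (τ - s) ^ (γ - 1) * mlKer α ρ β s := by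
    refine setIntegral_congr_fun measurableSet_Ioc fun s hs => ?_
    refine HasSum.tsum_eq ?_
    refine ((hasSum_mlKer ρ hα hs.1).mul_left ((τ - s) ^ (γ - 1))).congr_fun ?_
    intro j
    simp only [hF]; ring
  rw [intervalIntegral.integral_of_le hτ.le, ← h2]
  refine hS.unique ?_
  simp_rw [h1]
  exact (hasSum_mlKer ρ hα hτ).mul_left _

/-- Splitting off the leading term of the series. -/
lemma mlKer_succ {α β s : ℝ} (ρ : ℝ) (hα : 0 < α) (hs : 0 < s) :
    mlKer α ρ β s = s ^ β / Real.Gamma (β + 1) + ρ * mlKer α ρ (β + α) s := by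
  have h := hasSum_mlKer (β := β) ρ hα hs
  have h0 := h.summable.tsum_eq_zero_add
  rw [h.tsum_eq] at h0
  rw [h0, ← (hasSum_mlKer (β := β + α) ρ hα hs).tsum_eq, ← tsum_mul_left]
  congr 1
  · simp; ring
  · congr 1; ext j
    push_cast
    rw [show α * ((j : ℝ) + 1) + (β + 1) = α * j + (β + α + 1) by ring,
      show α * ((j : ℝ) + 1) + β = α * j + (β + α) by ring, pow_succ]
    ring

/-- `K_β` is the primitive of the continuous function `K_{β-1}`, by `integral_mlKer` with `γ = 1`. -/
lemma hasDerivAt_mlKer {α β s : ℝ} (ρ : ℝ) (hα : 0 < α) (hβ : 0 < β) (hs : 0 < s) :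
    HasDerivAt (mlKer α ρ β) (mlKer α ρ (β - 1) s) s := by
  have hβ' : -1 < β - 1 := by linarith
  have hc := continuousOn_mlKer ρ hα hβ'
  have hi := intervalIntegrable_mlKer ρ hα hβ' one_pos hs
  simp only [sub_self, Real.rpow_zero, one_mul] at hi
  have h := intervalIntegral.integral_hasDerivAt_right hi
    (hc.stronglyMeasurableAtFilter isOpen_Ioi s hs) (hc.continuousAt (Ioi_mem_nhds hs))
  refine h.congr_of_eventuallyEq ?_
  filter_upwards [Ioi_mem_nhds hs] with u hu
  have := integral_mlKer ρ hα hβ' one_pos hu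
  simpa using this.symm

lemma mlKer_zero_eq {α s : ℝ} (ρ : ℝ) (hα : 0 < α) (hs : 0 < s) :
    mlKer α ρ 0 s = 1 + ρ * mlKer α ρ α s := by
  simpa using mlKer_succ (β := 0) ρ hα hs

lemma mlKer_one_eq {α s : ℝ} (ρ : ℝ) (hα : 0 < α) (hs : 0 < s) :
    mlKer α ρ 1 s = s + ρ * mlKer α ρ (α + 1) s := by
  have := mlKer_succ (β := 1) ρ hα hs
  rw [add_comm α 1, this, one_add_one_eq_two, Real.Gamma_two]
  simp

/-! ### A mild-solution piece with base point `c` -/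

/-- Closed form of a mild-solution piece. After `u = t - θ` the forcing term is
`t - u = c + (t - c - u)`, which gives Riemann-Liouville integrals of orders `1` and `2`. -/
lemma mild_eq {α ρ a c t : ℝ} (hα : 0 < α) (ht : c < t) :
    mlf α 1 (ρ * (t - c) ^ α) * a +
        ∫ θ in c..t, (t - θ) ^ (α - 1) * mlf α α (ρ * (t - θ) ^ α) * θ =
      a * mlKer α ρ 0 (t - c) + c * mlKer α ρ α (t - c) + mlKer α ρ (α + 1) (t - c) := by
  have hτ : 0 < t - c := sub_pos.2 ht
  have hβ : -1 < α - 1 := by linarith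
  have e : ∫ θ in c..t, (t - θ) ^ (α - 1) * mlf α α (ρ * (t - θ) ^ α) * θ =
      ∫ u in (0 : ℝ)..(t - c), (c * ((t - c - u) ^ ((1 : ℝ) - 1) * mlKer α ρ (α - 1) u) +
        (t - c - u) ^ ((2 : ℝ) - 1) * mlKer α ρ (α - 1) u) := by
    have := intervalIntegral.integral_comp_sub_left (a := c) (b := t)
      (fun u => u ^ (α - 1) * mlf α α (ρ * u ^ α) * (t - u)) t
    simp only [sub_sub_cancel, sub_self] at this
    rw [this]
    refine intervalIntegral.integral_congr fun u _ => ?_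
    rw [show (2 : ℝ) - 1 = 1 by norm_num]
    simp only [mlKer, sub_self, Real.rpow_zero, Real.rpow_one, sub_add_cancel]
    ring
  rw [e, intervalIntegral.integral_add
    ((intervalIntegrable_mlKer ρ hα hβ one_pos hτ).const_mul c)
    (intervalIntegrable_mlKer ρ hα hβ two_pos hτ), intervalIntegral.integral_const_mul,
    integral_mlKer ρ hα hβ one_pos hτ, integral_mlKer ρ hα hβ two_pos hτ, Real.Gamma_one,
    Real.Gamma_two, show α - 1 + 1 = α by ring, show α - 1 + 2 = α + 1 by ring]
  simp only [mlKer, Real.rpow_zero, zero_add]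
  ring

/-- The derivative of a mild-solution piece started at time `c` from the value `a`, as a function of
the elapsed time `s`. -/
noncomputable def mildDeriv (α ρ a c s : ℝ) : ℝ :=
  (a * ρ + c) * mlKer α ρ (α - 1) s + mlKer α ρ α s

lemma hasDerivAt_mild {α ρ a c t : ℝ} (hα : 0 < α) (ht : c < t) :
    HasDerivAt (fun t => a * mlKer α ρ 0 (t - c) + c * mlKer α ρ α (t - c) +
      mlKer α ρ (α + 1) (t - c)) (mildDeriv α ρ a c (t - c)) t := by
  have hτ : 0 < t - c := sub_pos.2 ht
  have h1 := hasDerivAt_mlKer ρ hα hα hτ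
  have h2 := hasDerivAt_mlKer ρ hα (show 0 < α + 1 by linarith) hτ
  rw [add_sub_cancel_right] at h2
  have h0 : HasDerivAt (mlKer α ρ 0) (ρ * mlKer α ρ (α - 1) (t - c)) (t - c) := by
    refine ((h1.const_mul ρ).const_add 1).congr_of_eventuallyEq ?_
    filter_upwards [Ioi_mem_nhds hτ] with u hu using mlKer_zero_eq ρ hα hu
  have := ((h0.const_mul a).add (h1.const_mul c)).add h2
  have := HasDerivAt.comp_sub_const (f := fun u => a * mlKer α ρ 0 u + c * mlKer α ρ α u +
      mlKer α ρ (α + 1) u) t c this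
  refine this.congr_deriv ?_
  simp only [mildDeriv]; ring

lemma intervalIntegrable_mildDeriv {α ρ a c γ τ : ℝ} (hα : 0 < α) (hγ : 0 < γ) (hτ : 0 < τ) :
    IntervalIntegrable (fun s => (τ - s) ^ (γ - 1) * mildDeriv α ρ a c s) volume 0 τ := by
  refine (((intervalIntegrable_mlKer (β := α - 1) ρ hα (by linarith) hγ hτ).const_mul
    (a * ρ + c)).add (intervalIntegrable_mlKer (β := α) ρ hα (by linarith) hγ hτ)).congr
    fun s _ => ?_
  simp only [mildDeriv]; ring

lemma integral_mildDeriv {α ρ a c γ τ : ℝ} (hα : 0 < α) (hγ : 0 < γ) (hτ : 0 < τ) :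
    ∫ s in (0 : ℝ)..τ, (τ - s) ^ (γ - 1) * mildDeriv α ρ a c s =
      Real.Gamma γ * ((a * ρ + c) * mlKer α ρ (α - 1 + γ) τ + mlKer α ρ (α + γ) τ) := by
  have h1 := intervalIntegrable_mlKer (β := α - 1) ρ hα (by linarith) hγ hτ
  have h2 := intervalIntegrable_mlKer (β := α) ρ hα (by linarith) hγ hτ
  rw [mul_add, ← integral_mlKer ρ hα (by linarith) hγ hτ, mul_left_comm,
    ← integral_mlKer ρ hα (by linarith) hγ hτ, ← intervalIntegral.integral_const_mul,
    ← intervalIntegral.integral_add (h1.const_mul _) h2]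
  refine intervalIntegral.integral_congr fun s _ => ?_
  simp only [mildDeriv]; ring

/-- A mild-solution piece with base point `c` solves the Caputo equation with the same base point:
the right side is `Γ(1-α) (ρ x(c+τ) + (c+τ))`. -/
lemma caputo_mild {α ρ a c τ : ℝ} (hα : 0 < α) (hα1 : α < 1) (hτ : 0 < τ) :
    ∫ s in (0 : ℝ)..τ, (τ - s) ^ (-α) * mildDeriv α ρ a c s =
      Real.Gamma (1 - α) * (ρ * (a * mlKer α ρ 0 τ + c * mlKer α ρ α τ + mlKer α ρ (α + 1) τ) +
        (c + τ)) := by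
  have h := integral_mildDeriv (ρ := ρ) (a := a) (c := c) hα (sub_pos.2 hα1) hτ
  rw [show 1 - α - 1 = -α by ring, show α - 1 + (1 - α) = 0 by ring,
    show α + (1 - α) = 1 by ring] at h
  rw [h, mlKer_one_eq ρ hα hτ]
  linear_combination Real.Gamma (1 - α) * c * mlKer_zero_eq ρ hα hτ

/-! ### Vanishing of a function with vanishing power-law tail -/

/-- Differentiation in `t` under the integral sign lowers the exponent by one. The kernel is
nonsingular because `t` stays to the right of the interval of integration. -/
lemma integral_rpow_moments {g : ℝ → ℝ} {p b T : ℝ}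
    (hg : IntervalIntegrable g volume 0 b) (hb : 0 < b)
    (h : ∀ t ∈ Ioo b T, ∫ s in (0 : ℝ)..b, (t - s) ^ p * g s = 0) (hp : p < 0) :
    ∀ t ∈ Ioo b T, ∫ s in (0 : ℝ)..b, (t - s) ^ (p - 1) * g s = 0 := by
  intro t ht
  have hcont : ∀ (q u : ℝ), b < u → ContinuousOn (fun s => (u - s) ^ q) (uIcc 0 b) := by
    intro q u hu
    rw [uIcc_of_le hb.le]
    refine (continuousOn_const.sub continuousOn_id).rpow_const fun s hs => Or.inl ?_
    exact (sub_pos.2 (lt_of_le_of_lt hs.2 hu)).ne'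
  have hint : ∀ (q u : ℝ), b < u →
      IntervalIntegrable (fun s => (u - s) ^ q * g s) volume 0 b := fun q u hu =>
    hg.continuousOn_mul (hcont q u hu)
  have hm : b < (b + t) / 2 := by linarith [ht.1]
  have hd := (intervalIntegral.hasDerivAt_integral_of_dominated_loc_of_deriv_le
    (F := fun u s => (u - s) ^ p * g s) (F' := fun u s => p * ((u - s) ^ (p - 1) * g s))
    (μ := volume) (a := 0) (b := b) (x₀ := t) (s := Ioi ((b + t) / 2))
    (bound := fun s => |p| * (((b + t) / 2 - b) ^ (p - 1) * ‖g s‖))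
    (Ioi_mem_nhds (by linarith [ht.1]))
    (by
      filter_upwards [Ioi_mem_nhds ht.1] with u hu
      exact (hint p u hu).def'.aestronglyMeasurable)
    (hint p t ht.1) ((hint (p - 1) t ht.1).const_mul p).def'.aestronglyMeasurable
    (by
      refine ae_of_all _ fun s hs u hu => ?_
      rw [uIoc_of_le hb.le] at hs
      have hu' : (b + t) / 2 < u := hu
      have h1 : 0 < (b + t) / 2 - b := by linarith
      have h2 : (b + t) / 2 - b ≤ u - s := by linarith [hs.2]
      rw [norm_mul, norm_mul, Real.norm_eq_abs p,
        Real.norm_of_nonneg (Real.rpow_nonneg (h1.le.trans h2) _)]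
      have := Real.rpow_le_rpow_of_nonpos h1 h2 (show p - 1 ≤ 0 by linarith)
      gcongr)
    ((hg.norm.const_mul _).const_mul _)
    (by
      refine ae_of_all _ fun s hs u hu => ?_
      rw [uIoc_of_le hb.le] at hs
      have hu' : (b + t) / 2 < u := hu
      have h2 : u - s ≠ 0 := (show 0 < u - s by linarith [hs.2]).ne'
      have := (((hasDerivAt_id u).sub_const s).rpow_const (p := p) (Or.inl h2)).mul_const (g s)
      refine this.congr_deriv ?_
      simp only [id]; ring)).2
  have hz : HasDerivAt (fun u => ∫ s in (0 : ℝ)..b, (u - s) ^ p * g s) 0 t := by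
    refine (hasDerivAt_const t (0 : ℝ)).congr_of_eventuallyEq ?_
    filter_upwards [Ioo_mem_nhds ht.1 ht.2] with u hu using h u hu
  have := hd.unique hz
  rw [intervalIntegral.integral_const_mul] at this
  exact (mul_eq_zero.1 this).resolve_left hp.ne

/-- A function on `(0, b)` whose power-law potential vanishes on some interval to the right of `b` is
zero almost everywhere: it is orthogonal, after weighting, to all polynomials in `(t - s)⁻¹`. -/
lemma ae_zero_of_riesz_tail {g : ℝ → ℝ} {p b T : ℝ}
    (hg : IntervalIntegrable g volume 0 b) (hb : 0 < b) (hT : b < T)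
    (h : ∀ t ∈ Ioo b T, ∫ s in (0 : ℝ)..b, (t - s) ^ p * g s = 0) (hp : p < 0) :
    ∀ᵐ s, s ∈ Ioo 0 b → g s = 0 := by
  obtain ⟨t, ht⟩ := exists_between hT
  have hmom : ∀ n : ℕ, ∀ t ∈ Ioo b T, ∫ s in (0 : ℝ)..b, (t - s) ^ (p - n) * g s = 0 := by
    intro n
    induction n with
    | zero => simpa using h
    | succ n ih =>
      have := integral_rpow_moments hg hb ih (by linarith [(n.cast_nonneg : (0 : ℝ) ≤ n)])
      simpa [sub_sub] using this
  set w : ℝ → ℝ := fun s => (t - s) ^ p * g s with hw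
  have hpos : ∀ s ∈ Icc 0 b, 0 < t - s := fun s hs => by linarith [hs.2, ht.1]
  have hwi : IntervalIntegrable w volume 0 b := by
    refine hg.continuousOn_mul ?_
    rw [uIcc_of_le hb.le]
    exact (continuousOn_const.sub continuousOn_id).rpow_const fun s hs =>
      Or.inl (hpos s hs).ne'
  have hinv : ContinuousOn (fun s : ℝ => (t - s)⁻¹) (uIcc 0 b) := by
    rw [uIcc_of_le hb.le]
    exact (continuousOn_const.sub continuousOn_id).inv₀ fun s hs => (hpos s hs).ne'
  have hpoly : ∀ P : Polynomial ℝ, ∫ s in (0 : ℝ)..b, P.eval (t - s)⁻¹ * w s = 0 := by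
    intro P
    have hP : ∀ s, P.eval (t - s)⁻¹ * w s =
        ∑ n ∈ Finset.range (P.natDegree + 1), P.coeff n * ((t - s)⁻¹ ^ n * w s) := by
      intro s
      rw [Polynomial.eval_eq_sum_range, Finset.sum_mul]
      exact Finset.sum_congr rfl fun n _ => by ring
    simp_rw [hP]
    have hi : ∀ n : ℕ, IntervalIntegrable (fun s => P.coeff n * ((t - s)⁻¹ ^ n * w s)) volume 0 b :=
      fun n => (hwi.continuousOn_mul (hinv.fun_pow n)).const_mul (P.coeff n)
    rw [intervalIntegral.integral_finsetSum (fun n _ => hi n)]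
    refine Finset.sum_eq_zero fun n _ => ?_
    rw [intervalIntegral.integral_const_mul]
    refine mul_eq_zero_of_right _ (Eq.trans ?_ (hmom n t ht))
    refine intervalIntegral.integral_congr fun s hs => ?_
    rw [uIcc_of_le hb.le] at hs
    simp only [hw]
    rw [Real.rpow_sub_natCast (hpos s hs).ne', inv_pow]
    ring
  have hcont : ∀ φ : ℝ → ℝ, Continuous φ → ∫ s in (0 : ℝ)..b, φ s * w s = 0 := by
    intro φ hφ
    set M := ∫ s in (0 : ℝ)..b, ‖w s‖ with hM
    have hM0 : 0 ≤ M := intervalIntegral.integral_nonneg hb.le fun _ _ => norm_nonneg _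
    have hbt : 0 < t - b := by linarith [ht.1]
    have ht0 : 0 < t := hb.trans ht.1
    refine norm_le_zero_iff.1 (le_of_forall_pos_le_add fun ε hε => ?_)
    -- Weierstrass approximation in the variable `y = (t - s)⁻¹`, that is, `s = t - y⁻¹`
    obtain ⟨P, hP⟩ := exists_polynomial_near_of_continuousOn t⁻¹ (t - b)⁻¹
      (fun y => φ (t - y⁻¹)) (by
        refine hφ.comp_continuousOn (continuousOn_const.sub (continuousOn_id.inv₀ fun y hy => ?_))
        exact ((inv_pos.2 ht0).trans_le hy.1).ne') (ε / (M + 1)) (by positivity)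
    have hφi : IntervalIntegrable (fun s => φ s * w s) volume 0 b :=
      hwi.continuousOn_mul hφ.continuousOn
    have hPi : IntervalIntegrable (fun s => P.eval (t - s)⁻¹ * w s) volume 0 b :=
      hwi.continuousOn_mul (P.continuous.comp_continuousOn hinv)
    have hsub : ∫ s in (0 : ℝ)..b, φ s * w s =
        ∫ s in (0 : ℝ)..b, (φ s * w s - P.eval (t - s)⁻¹ * w s) := by
      rw [intervalIntegral.integral_sub hφi hPi, hpoly, sub_zero]
    rw [hsub]
    calc _ ≤ ∫ s in (0 : ℝ)..b, ε / (M + 1) * ‖w s‖ := by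
          refine intervalIntegral.norm_integral_le_of_norm_le hb.le ?_ (hwi.norm.const_mul _)
          refine ae_of_all _ fun s hs => ?_
          have hs' : 0 < t - s := hpos s ⟨hs.1.le, hs.2⟩
          have := hP (t - s)⁻¹ ⟨inv_anti₀ hs' (by linarith [hs.1]),
            inv_anti₀ hbt (by linarith [hs.2])⟩
          simp only [inv_inv, sub_sub_cancel] at this
          rw [← sub_mul, norm_mul, norm_sub_rev, Real.norm_eq_abs]
          gcongr
      _ = ε * (M / (M + 1)) := by
          rw [intervalIntegral.integral_const_mul]; ring
      _ ≤ 0 + ε := by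
          rw [zero_add]
          exact mul_le_of_le_one_right hε.le ((div_le_one (by positivity)).2 (by linarith))
  have hloc : IntegrableOn w (Ioc 0 b) :=
    (intervalIntegrable_iff_integrableOn_Ioc_of_le hb.le).1 hwi
  have hae := isOpen_Ioo.ae_eq_zero_of_integral_contDiff_smul_eq_zero (U := Ioo 0 b) (μ := volume)
    (hloc.mono_set Ioo_subset_Ioc_self).locallyIntegrableOn (by
      intro φ hφ _ hsupp
      rw [← hcont φ hφ.continuous, intervalIntegral.integral_of_le hb.le]
      refine (setIntegral_eq_integral_of_forall_compl_eq_zero fun s hs => ?_).symm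
      have : φ s = 0 := image_eq_zero_of_notMem_tsupport fun h' =>
        hs (Ioo_subset_Ioc_self (hsupp h'))
      simp [this])
  filter_upwards [hae] with s hs hsI
  exact (mul_eq_zero.1 (hs hsI)).resolve_left
    (Real.rpow_pos_of_pos (hpos s (Ioo_subset_Icc_self hsI)) _).ne'

/-! ### The restarted mild solution -/

/-- for `0 < α < 1`, the piecewise function `x` built from the mild
solution formula that restarts the integral at the impulse time `t₁` does NOT
satisfy the Caputo equation `({}_0D_t^α x)(t) = ρ x(t) + t` on all of `(t₁,T]`. -/
theorem mild_solution_restart_fails {α : ℝ} (hα0 : 0 < α) (hα1 : α < 1)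
    (ρ x₀ y₁ t₁ T : ℝ) (ht₁ : 0 < t₁) (hT : t₁ < T)
    (x : ℝ → ℝ)
    (hx0 : ∀ t ∈ Set.Icc (0 : ℝ) t₁,
      x t = mlf α 1 (ρ * t ^ α) * x₀ +
        ∫ θ in (0 : ℝ)..t,
          (t - θ) ^ (α - 1) * mlf α α (ρ * (t - θ) ^ α) * θ)
    (hx1 : ∀ t ∈ Set.Ioc t₁ T,
      x t = mlf α 1 (ρ * (t - t₁) ^ α) * (x t₁ + y₁) +
        ∫ θ in t₁..t,
          (t - θ) ^ (α - 1) * mlf α α (ρ * (t - θ) ^ α) * θ) :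
    ¬ ∀ t ∈ Set.Ioc t₁ T,
        (1 / Real.Gamma (1 - α)) *
            ∫ s in (0 : ℝ)..t, (t - s) ^ (-α) * deriv x s =
          ρ * x t + t := by
  intro H
  have hΓ : 0 < Real.Gamma (1 - α) := Real.Gamma_pos_of_pos (sub_pos.2 hα1)
  have hd0 : ∀ s ∈ Ioo 0 t₁, deriv x s = mildDeriv α ρ x₀ 0 s := by
    intro s hs
    have : HasDerivAt x (mildDeriv α ρ x₀ 0 (s - 0)) s := by
      refine (hasDerivAt_mild hα0 hs.1).congr_of_eventuallyEq ?_
      filter_upwards [Ioo_mem_nhds hs.1 hs.2] with u hu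
      have h := mild_eq (ρ := ρ) (a := x₀) hα0 hu.1
      simp only [sub_zero] at h ⊢
      exact (hx0 u (Ioo_subset_Icc_self hu)).trans h
    rw [this.deriv, sub_zero]
  have hd1 : ∀ s ∈ Ioo t₁ T, deriv x s = mildDeriv α ρ (x t₁ + y₁) t₁ (s - t₁) := by
    intro s hs
    refine HasDerivAt.deriv ((hasDerivAt_mild hα0 hs.1).congr_of_eventuallyEq ?_)
    filter_upwards [Ioo_mem_nhds hs.1 hs.2] with u hu
    exact (hx1 u (Ioo_subset_Ioc_self hu)).trans (mild_eq hα0 hu.1)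
  set g := mildDeriv α ρ x₀ 0 with hg
  have hgi : ∀ τ, 0 < τ → IntervalIntegrable g volume 0 τ := fun τ hτ => by
    simpa using intervalIntegrable_mildDeriv (ρ := ρ) (a := x₀) (c := 0) hα0 one_pos hτ
  have htail : ∀ t ∈ Ioo t₁ T, ∫ s in (0 : ℝ)..t₁, (t - s) ^ (-α) * g s = 0 := by
    intro t ht
    have hτ : 0 < t - t₁ := sub_pos.2 ht.1
    have c0 : EqOn (fun s => (t - s) ^ (-α) * g s) (fun s => (t - s) ^ (-α) * deriv x s)
        (Ioo 0 t₁) := fun s hs => by simp only [hd0 s hs]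
    have c1 : EqOn (fun s => (t - t₁ - (s - t₁)) ^ (-α) * mildDeriv α ρ (x t₁ + y₁) t₁ (s - t₁))
        (fun s => (t - s) ^ (-α) * deriv x s) (Ioo t₁ t) := fun s hs => by
      simp only [hd1 s ⟨hs.1, hs.2.trans ht.2⟩, sub_sub_sub_cancel_right]
    have i0 : IntervalIntegrable (fun s => (t - s) ^ (-α) * g s) volume 0 t₁ := by
      refine (hgi t₁ ht₁).continuousOn_mul ?_
      rw [uIcc_of_le ht₁.le]
      refine (continuousOn_const.sub continuousOn_id).rpow_const fun s hs => Or.inl ?_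
      exact (sub_pos.2 (lt_of_le_of_lt hs.2 ht.1)).ne'
    have i1 : IntervalIntegrable (fun s => (t - t₁ - (s - t₁)) ^ (-α) *
        mildDeriv α ρ (x t₁ + y₁) t₁ (s - t₁)) volume t₁ t := by
      have := (intervalIntegrable_mildDeriv (ρ := ρ) (a := x t₁ + y₁) (c := t₁) hα0
        (sub_pos.2 hα1) hτ).comp_sub_right t₁
      simpa using this
    have e1 : ∫ s in t₁..t, (t - t₁ - (s - t₁)) ^ (-α) *
        mildDeriv α ρ (x t₁ + y₁) t₁ (s - t₁) = Real.Gamma (1 - α) * (ρ * x t + t) := by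
      have := intervalIntegral.integral_comp_sub_right (a := t₁) (b := t)
        (fun s => (t - t₁ - s) ^ (-α) * mildDeriv α ρ (x t₁ + y₁) t₁ s) t₁
      rw [this, sub_self, caputo_mild hα0 hα1 hτ, hx1 t (Ioo_subset_Ioc_self ht),
        mild_eq hα0 ht.1]
      ring
    have j0 := i0.congr_uIoo ((uIoo_of_le ht₁.le).symm ▸ c0)
    have j1 := i1.congr_uIoo ((uIoo_of_le ht.1.le).symm ▸ c1)
    -- the part over `[t₁, t]` equals the whole right side, so the part over `[0, t₁]` vanishes
    have hH := H t (Ioo_subset_Ioc_self ht)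
    rw [← intervalIntegral.integral_add_adjacent_intervals j0 j1,
      ← intervalIntegral.integral_congr_Ioo_of_le ht₁.le c0,
      ← intervalIntegral.integral_congr_Ioo_of_le ht.1.le c1, e1, mul_add, ← mul_assoc,
      one_div_mul_cancel hΓ.ne', one_mul, add_eq_right] at hH
    exact (mul_eq_zero.1 hH).resolve_left (one_div_pos.2 hΓ).ne'
  have hae := ae_zero_of_riesz_tail (hgi t₁ ht₁) ht₁ hT htail (neg_lt_zero.2 hα0)
  have hline : ∀ τ ∈ Ioo 0 t₁, x₀ * ρ + τ = 0 := by
    intro τ hτ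
    -- `h1`: the increment of `x` over `[0, τ]` is zero; `h2`: so is the Caputo derivative at `τ`
    have h1 := integral_mildDeriv (ρ := ρ) (a := x₀) (c := 0) hα0 one_pos hτ.1
    have hz : ∀ k : ℝ → ℝ, ∫ s in (0 : ℝ)..τ, k s * g s = 0 := fun k => by
      rw [intervalIntegral.integral_of_le hτ.1.le]
      refine setIntegral_eq_zero_of_ae_eq_zero ?_
      filter_upwards [hae] with s hs hsI
      rw [hs ⟨hsI.1, hsI.2.trans_lt hτ.2⟩, mul_zero]
    have h2 := caputo_mild (ρ := ρ) (a := x₀) (c := 0) hα0 hα1 hτ.1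
    rw [← hg, hz, Real.Gamma_one, one_mul, add_zero, sub_add_cancel] at h1
    rw [← hg, hz, zero_mul, add_zero, zero_add] at h2
    have h3 := (mul_eq_zero.1 h2.symm).resolve_left hΓ.ne'
    linear_combination h3 + ρ * h1 - x₀ * ρ * mlKer_zero_eq ρ hα0 hτ.1
  have h1 := hline (t₁ / 2) ⟨by linarith, by linarith⟩
  have h2 := hline (t₁ / 3) ⟨by linarith, by linarith⟩
  linarith
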